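/- arXiv:2411.14305 — 2 statements merged into one kernel-verified Lean document; each statement's English description precedes it below -/
import Mathlib

section
/- Under the constraint system together with the sparse bounded t-th moment assumption, with δ = 1 − 2ε, for every k-sparse unit vector v one has ⟨v, μ − μ*⟩ ≤ 2^{2−1/t} · ε^{1−1/t} · M^{1/t} / δ. -/
open Finset MeasureTheory
open scoped BigOperators InnerProductSpace

/-- A vector `v ∈ ℝ^d` is a `k`-sparse unit vector if `‖v‖ = 1` and at most `k` of its
coordinates are nonzero. -/
def IsSparseUnitVector (d k : ℕ) (v : EuclideanSpace ℝ (Fin d)) : Prop :=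
  ‖v‖ = 1 ∧ ∃ s : Finset (Fin d), s.card ≤ k ∧ ∀ i, i ∉ s → v i = 0

/-
Fix a direction `v` and project the samples onto it. Write `u = w · w*`: since `x` and `x*` both
agree with `z` where their weights live, they agree with each other on `u`, and `u` has mean at
least `1 - 2ε`. Because the centred samples have mean zero,
`(mean of u) · ⟨v, μ - μ*⟩ = mean of (1 - u) · (⟨v, x - μ⟩ - ⟨v, x* - μ*⟩)`,
and Hölder's inequality with the weights `1 - u`, of total mean at most `2ε`, bounds each of the
two terms on the right by `(2ε)^(1 - 1/t) · M^(1/t)`.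
-/

section Expect

variable {ι : Type*} [Fintype ι]

lemma expect_mul_abs_le_of_mem_Icc {p : ℝ} (hp : 1 ≤ p) {r a : ι → ℝ}
    (hr : ∀ i, r i ∈ Set.Icc 0 1) :
    𝔼 i, r i * |a i| ≤ (𝔼 i, r i) ^ (1 - 1 / p) * (𝔼 i, |a i| ^ p) ^ (1 / p) := by
  have hr₀ : 0 ≤ 𝔼 i, r i := expect_nonneg fun i _ ↦ (hr i).1
  have hra : ∀ i, 0 ≤ r i * |a i| ^ p := fun i ↦ mul_nonneg (hr i).1 (by positivity)
  simp only [one_div]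
  refine (Real.compact_inner_le_weight_mul_Lp_of_nonneg univ hp (fun i ↦ (hr i).1)
    fun i ↦ abs_nonneg (a i)).trans ?_
  gcongr with i
  · exact expect_nonneg fun i _ ↦ hra i
  · exact mul_le_of_le_one_left (by positivity) (hr i).2

lemma expect_mul_expect_sub_expect {K : Type*} [Field K] [CharZero K] [Nonempty ι] {u a b : ι → K}
    (hab : ∀ i, u i * (a i - b i) = 0) :
    (𝔼 i, u i) * (𝔼 i, a i - 𝔼 i, b i) =
      𝔼 i, (1 - u i) * ((a i - 𝔼 j, a j) - (b i - 𝔼 j, b j)) := by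
  set D := 𝔼 i, a i - 𝔼 i, b i with hD
  have hterm : ∀ i, (1 - u i) * ((a i - 𝔼 j, a j) - (b i - 𝔼 j, b j)) =
      a i - b i - D + u i * D := fun i ↦ by linear_combination -hab i
  simp only [hterm, expect_add_distrib, expect_sub_distrib, Fintype.expect_const, ← expect_mul]
  rw [← hD]
  ring

lemma abs_expect_sub_expect_le_of_expect_rpow_le [Nonempty ι] {p : ℝ} (hp : 1 ≤ p)
    {η A B : ℝ} (hη : η < 1) {u a b : ι → ℝ} (hu : ∀ i, u i ∈ Set.Icc 0 1)
    (huη : 1 - η ≤ 𝔼 i, u i) (hab : ∀ i, u i * (a i - b i) = 0)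
    (hA : 𝔼 i, |a i - 𝔼 j, a j| ^ p ≤ A) (hB : 𝔼 i, |b i - 𝔼 j, b j| ^ p ≤ B) :
    |𝔼 i, a i - 𝔼 i, b i| ≤ η ^ (1 - 1 / p) * (A ^ (1 / p) + B ^ (1 / p)) / (1 - η) := by
  have hr : ∀ i, 1 - u i ∈ Set.Icc (0 : ℝ) 1 := fun i ↦ Set.Icc.mem_iff_one_sub_mem.1 (hu i)
  have hr₀ : 0 ≤ 𝔼 i, (1 - u i) := expect_nonneg fun i _ ↦ (hr i).1
  have hrη : 𝔼 i, (1 - u i) ≤ η := by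
    rw [expect_sub_distrib, Fintype.expect_const]
    linarith
  have hp' : 0 ≤ 1 - 1 / p := sub_nonneg.2 (div_le_self zero_le_one hp)
  have holder : ∀ {c : ι → ℝ} {C : ℝ}, 𝔼 i, |c i| ^ p ≤ C →
      𝔼 i, (1 - u i) * |c i| ≤ η ^ (1 - 1 / p) * C ^ (1 / p) := fun {c C} hc ↦ by
    have hη₀ : 0 ≤ η := hr₀.trans hrη
    exact (expect_mul_abs_le_of_mem_Icc hp hr).trans (by gcongr)
  rw [le_div_iff₀' (sub_pos.2 hη)]
  calc (1 - η) * |𝔼 i, a i - 𝔼 i, b i|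
      ≤ (𝔼 i, u i) * |𝔼 i, a i - 𝔼 i, b i| := by gcongr
    _ = |𝔼 i, (1 - u i) * ((a i - 𝔼 j, a j) - (b i - 𝔼 j, b j))| := by
        rw [← expect_mul_expect_sub_expect hab, abs_mul,
          abs_of_nonneg (expect_nonneg fun i _ ↦ (hu i).1)]
    _ ≤ 𝔼 i, ((1 - u i) * |a i - 𝔼 j, a j| + (1 - u i) * |b i - 𝔼 j, b j|) := by
        refine (abs_expect_le _ _).trans (expect_le_expect fun i _ ↦ ?_)
        rw [abs_mul, abs_of_nonneg (hr i).1, ← mul_add]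
        exact mul_le_mul_of_nonneg_left (abs_sub _ _) (hr i).1
    _ ≤ η ^ (1 - 1 / p) * (A ^ (1 / p) + B ^ (1 / p)) := by
        rw [expect_add_distrib, mul_add]
        exact add_le_add (holder hA) (holder hB)

lemma expect_add_expect_sub_one_le_expect_mul {K : Type*} [Field K] [LinearOrder K]
    [IsStrictOrderedRing K] [Nonempty ι] {w w' : ι → K} (hw : ∀ i, w i ≤ 1) (hw' : ∀ i, w' i ≤ 1) :
    𝔼 i, w i + 𝔼 i, w' i - 1 ≤ 𝔼 i, w i * w' i := by
  calc 𝔼 i, w i + 𝔼 i, w' i - 1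
      = 𝔼 i, (w i + w' i - 1) := by
        rw [expect_sub_distrib, expect_add_distrib, Fintype.expect_const]
    _ ≤ 𝔼 i, w i * w' i := expect_le_expect fun i _ ↦ by
        linarith [mul_nonneg (sub_nonneg.2 (hw i)) (sub_nonneg.2 (hw' i))]

end Expect

lemma one_div_mul_sum_eq_expect {K : Type*} [Semifield K] [CharZero K] {n : ℕ} (a : Fin n → K) :
    (1 / (n : K)) * ∑ i, a i = 𝔼 i, a i := by
  rw [Fintype.expect_eq_sum_div_card, Fintype.card_fin, one_div_mul_eq_div]

lemma inner_one_div_smul_sum_eq_expect {E : Type*} [NormedAddCommGroup E] [InnerProductSpace ℝ E]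
    {n : ℕ} (v : E) (x : Fin n → E) :
    ⟪v, (1 / (n : ℝ)) • ∑ i, x i⟫_ℝ = 𝔼 i, ⟪v, x i⟫_ℝ := by
  rw [inner_smul_right, inner_sum, one_div_mul_sum_eq_expect]

lemma two_mul_rpow_mul_add_self {ε : ℝ} (hε : 0 ≤ ε) (s C : ℝ) :
    (2 * ε) ^ (1 - s) * (C + C) = 2 ^ (2 - s) * ε ^ (1 - s) * C := by
  have htwo : (2 : ℝ) ^ (2 - s) = 2 ^ (1 - s) * 2 := by
    rw [← Real.rpow_add_one two_ne_zero]
    ring_nf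
  rw [Real.mul_rpow zero_le_two hε, htwo]
  ring

theorem sparse_mean_optimal_breakdown_general {E : Type*} [NormedAddCommGroup E]
    [InnerProductSpace ℝ E] {n : ℕ} [NeZero n] {p M ε : ℝ} (hp : 1 ≤ p) (hε₀ : 0 ≤ ε)
    (hε : ε < 1 / 2) {z x xs : Fin n → E} {w ws : Fin n → ℝ}
    (hw : ∀ i, w i ∈ Set.Icc 0 1) (hwz : ∀ i, w i • (z i - x i) = 0)
    (hws : ∀ i, ws i ∈ Set.Icc 0 1) (hwsz : ∀ i, ws i • (z i - xs i) = 0)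
    (hwsum : 1 - ε ≤ (1 / (n : ℝ)) * ∑ i, w i) (hwssum : 1 - ε ≤ (1 / (n : ℝ)) * ∑ i, ws i)
    {μ μs : E} (hμ : μ = (1 / (n : ℝ)) • ∑ i, x i) (hμs : μs = (1 / (n : ℝ)) • ∑ i, xs i) (v : E)
    (hmom : (1 / (n : ℝ)) * ∑ i, |⟪v, x i - μ⟫_ℝ| ^ p ≤ M)
    (hmoms : (1 / (n : ℝ)) * ∑ i, |⟪v, xs i - μs⟫_ℝ| ^ p ≤ M) :
    |⟪v, μ - μs⟫_ℝ| ≤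
      2 ^ (2 - 1 / p) * ε ^ (1 - 1 / p) * M ^ (1 / p) / (1 - 2 * ε) := by
  have hagree : ∀ i, w i * ws i * (⟪v, x i⟫_ℝ - ⟪v, xs i⟫_ℝ) = 0 := fun i ↦ by
    have hx := congrArg (⟪v, ·⟫_ℝ) (hwz i)
    have hxs := congrArg (⟪v, ·⟫_ℝ) (hwsz i)
    simp only [inner_smul_right, inner_sub_right, inner_zero_right] at hx hxs
    linear_combination w i * hxs - ws i * hx
  simp only [one_div_mul_sum_eq_expect] at hwsum hwssum hmom hmoms
  subst hμ hμs
  simp only [inner_sub_right, inner_one_div_smul_sum_eq_expect] at hmom hmoms ⊢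
  have hoverlap : 1 - 2 * ε ≤ 𝔼 i, w i * ws i := by
    linarith [expect_add_expect_sub_one_le_expect_mul (fun i ↦ (hw i).2) fun i ↦ (hws i).2]
  rw [← two_mul_rpow_mul_add_self hε₀]
  exact abs_expect_sub_expect_le_of_expect_rpow_le hp (by linarith)
    (fun i ↦ unitInterval.mul_mem (hw i) (hws i)) hoverlap hagree hmom hmoms

lemma mem_Icc_zero_one_of_sq_eq_self {R : Type*} [Ring R] [LinearOrder R] [IsStrictOrderedRing R]
    {w : R} (hw : w ^ 2 = w) : w ∈ Set.Icc 0 1 := by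
  rcases eq_zero_or_one_of_sq_eq_self hw with rfl | rfl <;> simp

lemma mul_sum_abs_rpow_le_of_sq_le {ι : Type*} [Fintype ι] {t : ℕ} (ht : Even t) {M c : ℝ}
    (hM : 0 ≤ M) {a : ι → ℝ} (h : (c * ∑ i, a i ^ t) ^ 2 ≤ M ^ 2) :
    c * ∑ i, |a i| ^ (t : ℝ) ≤ M := by
  simpa only [Real.rpow_natCast, ht.pow_abs] using le_of_sq_le_sq h hM

/-- Theorem D.3 of the paper: optimal breakdown point for robust sparse mean estimation,
`⟨v, μ − μ*⟩ ≤ 2^(2−1/t) · ε^(1−1/t) · M^(1/t) / δ` with `δ = 1 − 2ε`. -/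
theorem sparse_mean_optimal_breakdown
    (n d k t : ℕ) (hn : 1 ≤ n) (hd : 1 ≤ d) (hk1 : 1 ≤ k) (hkd : k ≤ d)
    (ht : 2 ≤ t) (htpow : ∃ m : ℕ, t = 2 ^ m)
    (M : ℝ) (hM : 0 < M)
    (ε : ℝ) (hε0 : 0 ≤ ε) (hε : ε < 1 / 2)
(z x xs : Fin n → EuclideanSpace ℝ (Fin d)) (w ws : Fin n → ℝ)
    (hw : ∀ i, w i ^ 2 = w i)
    (hwz : ∀ i, w i • (z i - x i) = 0)
    (hws : ∀ i, ws i ^ 2 = ws i)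
    (hwsz : ∀ i, ws i • (z i - xs i) = 0)
    (hwsum : 1 - ε ≤ (1 / (n : ℝ)) * ∑ i, w i)
    (hwssum : 1 - ε ≤ (1 / (n : ℝ)) * ∑ i, ws i)
    (μ μs : EuclideanSpace ℝ (Fin d))
    (hμ : μ = (1 / (n : ℝ)) • ∑ i, x i)
    (hμs : μs = (1 / (n : ℝ)) • ∑ i, xs i)
    (hmom : ∀ v : EuclideanSpace ℝ (Fin d), IsSparseUnitVector d k v →
      ((1 / (n : ℝ)) * ∑ i, ⟪v, x i - μ⟫_ℝ ^ t) ^ 2 ≤ M ^ 2)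
    (hmoms : ∀ v : EuclideanSpace ℝ (Fin d), IsSparseUnitVector d k v →
      ((1 / (n : ℝ)) * ∑ i, ⟪v, xs i - μs⟫_ℝ ^ t) ^ 2 ≤ M ^ 2) :
    ∀ v : EuclideanSpace ℝ (Fin d), IsSparseUnitVector d k v →
      ⟪v, μ - μs⟫_ℝ ≤
        (2 : ℝ) ^ ((2 : ℝ) - 1 / (t : ℝ)) * ε ^ (1 - 1 / (t : ℝ)) * M ^ (1 / (t : ℝ)) /
          (1 - 2 * ε) := by
  intro v hv
  have : NeZero n := ⟨by omega⟩
  have ht1 : (1 : ℝ) ≤ t := by exact_mod_cast one_le_two.trans ht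
  have hteven : Even t := by
    obtain ⟨m, rfl⟩ := htpow
    exact even_two.pow_of_ne_zero (by rintro rfl; omega)
  exact (le_abs_self _).trans <| sparse_mean_optimal_breakdown_general ht1 hε0 hε
    (fun i ↦ mem_Icc_zero_one_of_sq_eq_self (hw i)) hwz
    (fun i ↦ mem_Icc_zero_one_of_sq_eq_self (hws i)) hwsz hwsum hwssum hμ hμs v
    (mul_sum_abs_rpow_le_of_sq_le hteven hM.le (hmom v hv))
    (mul_sum_abs_rpow_le_of_sq_le hteven hM.le (hmoms v hv))
end

section
/- For every ε ∈ (0, 1/2) there exist Borel probability distributions D1 and D2 on ℝ such that: (1) D1 = N(0,1); (2) d_TV(D1, D2) ≤ ε; (3) D2 has mean μ2 = ε·√(log(1/ε)) and variance at most 1 + ε·log(1/ε); hence the means of D1 and D2 differ by ε·√(log(1/ε)). -/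
open MeasureTheory ProbabilityTheory

/-- The total variation distance between two measures:
`d_TV(P,Q) = sup_A |P(A) − Q(A)|` over measurable sets `A`. -/
noncomputable def tvDist {α : Type*} [MeasurableSpace α]
    (P Q : MeasureTheory.Measure α) : ℝ :=
  ⨆ A : {s : Set α // MeasurableSet s}, |(P A.1).toReal - (Q A.1).toReal|

/-!
Moving a mass `ε` of a distribution `P` to the single point `P[id] + s` changes the probability of
no event by more than `ε`, and shifts the mean by `ε * s`. By the law of total variance the
variance becomes `(1 - ε) * (Var[id; P] + ε * s ^ 2)`. The witness is the case `P = N(0,1)`,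
`s = √(log (1 / ε))`.
-/

theorem tvDist_le_one {α : Type*} [MeasurableSpace α] {P Q : Measure α}
    [IsProbabilityMeasure P] [IsProbabilityMeasure Q] : tvDist P Q ≤ 1 :=
  Real.iSup_le (fun _ => abs_sub_le_of_nonneg_of_le measureReal_nonneg measureReal_le_one
    measureReal_nonneg measureReal_le_one) zero_le_one

section SecondMoment

variable {Ω : Type*} [MeasurableSpace Ω] {P : Measure Ω} {X : Ω → ℝ}

theorem integrable_sub_sq [IsFiniteMeasure P] (hX : MemLp X 2 P) (m : ℝ) :
    Integrable (fun ω => (X ω - m) ^ 2) P :=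
  (hX.sub (memLp_const m)).integrable_sq

theorem integral_sub_sq_eq_variance_add_sq [IsProbabilityMeasure P] (hX : MemLp X 2 P) (m : ℝ) :
    ∫ ω, (X ω - m) ^ 2 ∂P = Var[X; P] + (P[X] - m) ^ 2 := by
  have hmean : ∫ ω, (X ω - m) ∂P = P[X] - m := by
    rw [integral_sub (hX.integrable one_le_two) (integrable_const m), integral_const,
      probReal_univ, one_smul]
  have hvar : Var[X; P] = ∫ ω, (X ω - m) ^ 2 ∂P - (P[X] - m) ^ 2 := by
    rw [← variance_sub_const hX.aestronglyMeasurable m, ← hmean]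
    exact variance_eq_sub (hX.sub (memLp_const m))
  rw [hvar, sub_add_cancel]

end SecondMoment

theorem memLp_dirac {α E : Type*} [MeasurableSpace α] [MeasurableSingletonClass α]
    [NormedAddCommGroup E] {a : α} (f : α → E) (p : ENNReal) : MemLp f p (Measure.dirac a) :=
  (memLp_const (f a)).ae_eq (ae_eq_dirac f).symm

section Mixture

open unitInterval

/-- The mixture `(1 - ε) P + ε Q`: the contamination of `P` by a fraction `ε` of `Q`. The weight
is taken in the unit interval so that mixtures of probability measures are again such. -/
noncomputable def mixture {α : Type*} [MeasurableSpace α] (ε : I) (P Q : Measure α) : Measure α :=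
  toNNReal ε • Q + toNNReal (σ ε) • P

variable {α : Type*} [MeasurableSpace α] {ε : I} {P Q : Measure α}

instance isProbabilityMeasure_mixture [IsProbabilityMeasure P] [IsProbabilityMeasure Q] :
    IsProbabilityMeasure (mixture ε P Q) :=
  inferInstanceAs (IsProbabilityMeasure (toNNReal ε • Q + toNNReal (σ ε) • P))

theorem measureReal_mixture [IsFiniteMeasure P] [IsFiniteMeasure Q] (A : Set α) :
    (mixture ε P Q).real A = (1 - ε) * P.real A + ε * Q.real A := by
  rw [mixture, measureReal_add_apply, measureReal_nnreal_smul_apply,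
    measureReal_nnreal_smul_apply, coe_toNNReal, coe_toNNReal, coe_symm_eq, add_comm]

theorem tvDist_mixture [IsFiniteMeasure P] [IsFiniteMeasure Q] :
    tvDist P (mixture ε P Q) = ε * tvDist P Q := by
  rw [tvDist, tvDist, Real.mul_iSup_of_nonneg ε.2.1]
  congr with A
  simp only [← measureReal_def]
  have hdiff : P.real A - (mixture ε P Q).real A = ε * (P.real A - Q.real A) := by
    rw [measureReal_mixture]
    ring
  rw [hdiff, abs_mul, abs_of_nonneg ε.2.1]

theorem tvDist_mixture_le [IsProbabilityMeasure P] [IsProbabilityMeasure Q] :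
    tvDist P (mixture ε P Q) ≤ ε :=
  tvDist_mixture.trans_le (mul_le_of_le_one_right ε.2.1 tvDist_le_one)

section Integral

variable {E : Type*} [NormedAddCommGroup E] {f : α → E}

theorem integrable_mixture (hP : Integrable f P) (hQ : Integrable f Q) :
    Integrable f (mixture ε P Q) :=
  hQ.smul_measure_nnreal.add_measure hP.smul_measure_nnreal

theorem integral_mixture [NormedSpace ℝ E] (hP : Integrable f P) (hQ : Integrable f Q) :
    ∫ x, f x ∂(mixture ε P Q) = (1 - ε : ℝ) • ∫ x, f x ∂P + (ε : ℝ) • ∫ x, f x ∂Q := by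
  rw [mixture, integral_add_measure hQ.smul_measure_nnreal hP.smul_measure_nnreal,
    integral_smul_nnreal_measure, integral_smul_nnreal_measure, add_comm]
  rfl

end Integral

theorem variance_mixture [IsProbabilityMeasure P] [IsProbabilityMeasure Q] {X : α → ℝ}
    (hP : MemLp X 2 P) (hQ : MemLp X 2 Q) :
    Var[X; mixture ε P Q] =
      (1 - ε) * Var[X; P] + ε * Var[X; Q] + ε * (1 - ε) * (P[X] - Q[X]) ^ 2 := by
  have hP1 : Integrable X P := hP.integrable one_le_two
  have hQ1 : Integrable X Q := hQ.integrable one_le_two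
  have hmean : ∫ x, X x ∂(mixture ε P Q) = (1 - ε) * P[X] + ε * Q[X] := integral_mixture hP1 hQ1
  rw [variance_eq_integral (integrable_mixture hP1 hQ1).aemeasurable,
    integral_mixture (integrable_sub_sq hP _) (integrable_sub_sq hQ _),
    integral_sub_sq_eq_variance_add_sq hP, integral_sub_sq_eq_variance_add_sq hQ, hmean,
    smul_eq_mul, smul_eq_mul]
  ring

end Mixture

theorem lower_bound_gaussian_vs_bounded_covariance_small_eps_general
    (P : Measure ℝ) [IsProbabilityMeasure P] (hP : MemLp id 2 P)
    (ε : ℝ) (hε0 : 0 ≤ ε) (hε1 : ε ≤ 1) (s : ℝ) :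
    ∃ D2 : Measure ℝ, IsProbabilityMeasure D2 ∧
      tvDist P D2 ≤ ε ∧
      Integrable (id : ℝ → ℝ) D2 ∧
      (∫ y, y ∂D2) = (∫ y, y ∂P) + ε * s ∧
      Integrable (fun x => (x - ∫ y, y ∂D2) ^ 2) D2 ∧
      (∫ x, (x - ∫ y, y ∂D2) ^ 2 ∂D2) ≤ Var[id; P] + ε * s ^ 2 := by
  lift ε to unitInterval using ⟨hε0, hε1⟩
  set m := ∫ y, y ∂P
  have hP1 : Integrable id P := hP.integrable one_le_two
  have hδ : MemLp id 2 (Measure.dirac (m + s)) := memLp_dirac id 2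
  have hδ1 : Integrable id (Measure.dirac (m + s)) := hδ.integrable one_le_two
  have hD : Integrable id (mixture ε P (Measure.dirac (m + s))) := integrable_mixture hP1 hδ1
  refine ⟨mixture ε P (Measure.dirac (m + s)), inferInstance, tvDist_mixture_le, hD, ?mean,
    integrable_mixture (integrable_sub_sq hP _) (integrable_sub_sq hδ _), ?variance⟩
  case mean =>
    refine (integral_mixture hP1 hδ1).trans ?_
    simp only [id_eq, integral_dirac, smul_eq_mul]
    ring
  case variance =>
    have hvar : Var[id; mixture ε P (Measure.dirac (m + s))] =
        (1 - ε) * (Var[id; P] + ε * s ^ 2) := by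
      rw [variance_mixture hP hδ, variance_dirac]
      simp only [id_eq, integral_dirac]
      ring
    refine (variance_eq_integral hD.aemeasurable).symm.trans_le (hvar.trans_le ?_)
    exact mul_le_of_le_one_left (add_nonneg (variance_nonneg id P) (mul_nonneg hε0 (sq_nonneg s)))
      (sub_le_self 1 hε0)

/-- Lemma E.2 of the paper (tightness of Kothari–Manohar–Zhang): for `ε ∈ (0, 1/2)` there is
a distribution `D2` on `ℝ` with `d_TV(N(0,1), D2) ≤ ε`, mean exactly `ε·√(log(1/ε))`, and
variance at most `1 + ε·log(1/ε)`. -/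
theorem lower_bound_gaussian_vs_bounded_covariance_small_eps
    (ε : ℝ) (hε0 : 0 < ε) (hε : ε < 1 / 2) :
    ∃ D2 : Measure ℝ, IsProbabilityMeasure D2 ∧
      tvDist (gaussianReal 0 1) D2 ≤ ε ∧
      Integrable (id : ℝ → ℝ) D2 ∧
      (∫ y, y ∂D2) = ε * Real.sqrt (Real.log (1 / ε)) ∧
      Integrable (fun x => (x - ∫ y, y ∂D2) ^ 2) D2 ∧
      (∫ x, (x - ∫ y, y ∂D2) ^ 2 ∂D2) ≤ 1 + ε * Real.log (1 / ε) := by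
  have hlog : 0 ≤ Real.log (1 / ε) := Real.log_nonneg (by rw [le_div_iff₀ hε0]; linarith)
  simpa only [integral_id_gaussianReal, variance_id_gaussianReal, NNReal.coe_one, zero_add,
    Real.sq_sqrt hlog] using
    lower_bound_gaussian_vs_bounded_covariance_small_eps_general
      (gaussianReal 0 1) (memLp_id_gaussianReal 2) ε hε0.le (by linarith) √(Real.log (1 / ε))
end
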